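/- arXiv:2310.11611 — 8 statements merged into one kernel-verified Lean document; each statement's English description precedes it below -/
import Mathlib

section
/- For any x, y ∈ ℝⁿ with n ≥ 2 and any 1 ≤ m ≤ n, the variance of the pruning estimator over a uniformly random size-m subset S of {1,…,n} is Var[(n/m)·∑_{i∈S} x_i y_i] = (n/m − 1)·∑_{i=1}ⁿ x_i² y_i² + ((m−n)/(m(n−1)))·∑_{i≠j} x_i y_i x_j y_j. -/
open Finset

/-!
A fixed `k`-element subset of an `n`-element population lies in a uniform sample of size `m` with
probability `C(m, k) / C(n, k)`. Taking `k = 1` gives the first moment of the sample total. The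
second moment comes from splitting the square into diagonal terms (`k = 1`) and off-diagonal terms
(`k = 2`).
-/

section

open scoped BigOperators

variable {ι β M R K : Type*}

lemma expect_sub_expect_sq [CommRing R] [Algebra ℚ≥0 R] (s : Finset ι) (f : ι → R) :
    𝔼 i ∈ s, (f i - 𝔼 j ∈ s, f j) ^ 2 = 𝔼 i ∈ s, f i ^ 2 - (𝔼 i ∈ s, f i) ^ 2 := by
  obtain rfl | hs := s.eq_empty_or_nonempty
  · simp
  simp only [sub_sq, expect_add_distrib, expect_sub_distrib, ← expect_mul, ← mul_expect,
    expect_const hs]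
  ring

variable {s t : Finset ι} {k m : ℕ}

lemma sq_sum_eq_sum_sq_add_sum_offDiag [CommSemiring R] (s : Finset ι) (a : ι → R) :
    (∑ i ∈ s, a i) ^ 2 = ∑ i ∈ s, a i ^ 2 + ∑ p ∈ s.offDiag, a p.1 * a p.2 := by
  classical
  rw [sq, sum_mul_sum, ← sum_product', ← diag_union_offDiag,
    sum_union (disjoint_diag_offDiag s), sum_diag]
  simp only [sq]

lemma sum_offDiag_eq_sum_sum_sdiff [DecidableEq ι] [AddCommMonoid M] (s : Finset ι)
    (f : ι → ι → M) :
    ∑ p ∈ s.offDiag, f p.1 p.2 = ∑ i ∈ s, ∑ j ∈ s \ {i}, f i j :=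
  sum_finset_product' _ _ _ (by grind)

lemma card_filter_subset_powersetCard_mul_choose [DecidableEq ι] (hts : t ⊆ s) (m : ℕ) :
    #{S ∈ powersetCard m s | t ⊆ S} * (#s).choose #t = (#s).choose m * m.choose #t := by
  obtain htm | hmt := le_or_gt #t m
  · rw [card_filter_powersetCard_subset t s m hts htm, Nat.choose_mul htm, mul_comm]
  · have h_empty : {S ∈ powersetCard m s | t ⊆ S} = ∅ :=
      filter_false_of_mem fun S hS htS ↦
        hmt.not_ge ((card_le_card htS).trans_eq (mem_powersetCard.1 hS).2)
    simp [h_empty, Nat.choose_eq_zero_of_lt hmt]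

section Semifield

variable [Semifield K] [CharZero K]

lemma expect_powersetCard_ite_subset [DecidableEq ι] (hts : t ⊆ s) (hms : m ≤ #s) (c : K) :
    𝔼 S ∈ powersetCard m s, (if t ⊆ S then c else 0) =
      (m.choose #t : K) / ((#s).choose #t) * c := by
  have h_samples : ((#s).choose m : K) ≠ 0 := mod_cast (Nat.choose_pos hms).ne'
  have h_subsets : ((#s).choose #t : K) ≠ 0 := mod_cast (Nat.choose_pos (card_le_card hts)).ne'
  have h_count : (#{S ∈ powersetCard m s | t ⊆ S} : K) * (#s).choose #t =
      (#s).choose m * m.choose #t := mod_cast card_filter_subset_powersetCard_mul_choose hts m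
  rw [expect_eq_sum_div_card, ← sum_filter, sum_const, nsmul_eq_mul, card_powersetCard,
    mul_div_right_comm]
  congr 1
  rw [div_eq_div_iff h_samples h_subsets, h_count, mul_comm]

lemma expect_powersetCard_sum_filter_subset [DecidableEq ι] {T : Finset β} {t : β → Finset ι}
    (hts : ∀ b ∈ T, t b ⊆ s) (htk : ∀ b ∈ T, #(t b) = k) (hms : m ≤ #s) (f : β → K) :
    𝔼 S ∈ powersetCard m s, ∑ b ∈ T with t b ⊆ S, f b =
      (m.choose k : K) / ((#s).choose k) * ∑ b ∈ T, f b := by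
  simp only [sum_filter]
  rw [expect_sum_comm, mul_sum]
  refine sum_congr rfl fun b hb ↦ ?_
  rw [expect_powersetCard_ite_subset (hts b hb) hms, htk b hb]

lemma expect_powersetCard_sum (hms : m ≤ #s) (a : ι → K) :
    𝔼 S ∈ powersetCard m s, ∑ i ∈ S, a i = m / #s * ∑ i ∈ s, a i := by
  classical
  have h_sample : ∀ S ∈ powersetCard m s, ∑ i ∈ S, a i = ∑ i ∈ s with {i} ⊆ S, a i := by
    intro S hS
    rw [show {i ∈ s | {i} ⊆ S} = S by grind]
  rw [expect_congr rfl h_sample, expect_powersetCard_sum_filter_subset (k := 1) (by simp)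
    (by simp) hms, Nat.choose_one_right, Nat.choose_one_right]

end Semifield

variable [Field K] [CharZero K]

lemma expect_powersetCard_sum_offDiag (hms : m ≤ #s) (f : ι × ι → K) :
    𝔼 S ∈ powersetCard m s, ∑ p ∈ S.offDiag, f p =
      m * (m - 1) / (#s * (#s - 1)) * ∑ p ∈ s.offDiag, f p := by
  classical
  have h_sample : ∀ S ∈ powersetCard m s,
      ∑ p ∈ S.offDiag, f p = ∑ p ∈ s.offDiag with {p.1, p.2} ⊆ S, f p := by
    intro S hS
    rw [show {p ∈ s.offDiag | {p.1, p.2} ⊆ S} = S.offDiag by grind]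
  rw [expect_congr rfl h_sample, expect_powersetCard_sum_filter_subset (k := 2) (by grind)
    (fun p hp ↦ card_pair (mem_offDiag.1 hp).2.2) hms, Nat.cast_choose_two, Nat.cast_choose_two,
    div_div_div_cancel_right₀ two_ne_zero]

lemma expect_powersetCard_sq_sum (hms : m ≤ #s) (a : ι → K) :
    𝔼 S ∈ powersetCard m s, (∑ i ∈ S, a i) ^ 2 =
      m / #s * ∑ i ∈ s, a i ^ 2 +
        m * (m - 1) / (#s * (#s - 1)) * ∑ p ∈ s.offDiag, a p.1 * a p.2 := by
  simp only [sq_sum_eq_sum_sq_add_sum_offDiag]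
  rw [expect_add_distrib, expect_powersetCard_sum hms, expect_powersetCard_sum_offDiag hms]

lemma expect_powersetCard_sum_sub_expect_sq (hs : 2 ≤ #s) (hms : m ≤ #s) (a : ι → K) :
    𝔼 S ∈ powersetCard m s, (∑ i ∈ S, a i - 𝔼 T ∈ powersetCard m s, ∑ i ∈ T, a i) ^ 2 =
      m * (#s - m) / #s ^ 2 *
        (∑ i ∈ s, a i ^ 2 - (∑ p ∈ s.offDiag, a p.1 * a p.2) / (#s - 1)) := by
  have hs₀ : (#s : K) ≠ 0 := Nat.cast_ne_zero.2 (by lia)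
  have hs₁ : (#s : K) - 1 ≠ 0 := sub_ne_zero.2 (Nat.cast_ne_one.2 (by lia))
  rw [expect_sub_expect_sq, expect_powersetCard_sum hms, expect_powersetCard_sq_sum hms, mul_pow,
    sq_sum_eq_sum_sq_add_sum_offDiag s]
  field_simp
  ring

theorem pruning_estimator_variance_general [DecidableEq ι] (hs : 2 ≤ #s) (hm : 1 ≤ m)
    (hms : m ≤ #s) (x y : ι → K) :
    let est : Finset ι → K := fun S ↦ #s / m * ∑ i ∈ S, x i * y i
    𝔼 S ∈ powersetCard m s, (est S - 𝔼 T ∈ powersetCard m s, est T) ^ 2 =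
      (#s / m - 1) * ∑ i ∈ s, x i ^ 2 * y i ^ 2 +
        (m - #s) / (m * (#s - 1)) * ∑ i ∈ s, ∑ j ∈ s \ {i}, x i * y i * (x j * y j) := by
  have hm₀ : (m : K) ≠ 0 := Nat.cast_ne_zero.2 (by lia)
  have hs₀ : (#s : K) ≠ 0 := Nat.cast_ne_zero.2 (by lia)
  have hs₁ : (#s : K) - 1 ≠ 0 := sub_ne_zero.2 (Nat.cast_ne_one.2 (by lia))
  intro est
  simp only [est, ← mul_expect, ← mul_sub, mul_pow (#s / m : K)]
  rw [expect_powersetCard_sum_sub_expect_sq hs hms,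
    ← sum_offDiag_eq_sum_sum_sdiff s fun i j ↦ x i * y i * (x j * y j)]
  simp only [mul_pow]
  field_simp
  ring

end

/-- Variance of the pruning estimator of the inner product over a uniformly random
size-`m` subset `S` of `{1,…,n}`:
`Var[(n/m)·∑_{i∈S} x_i y_i] = (n/m − 1)·∑ x_i² y_i² + ((m−n)/(m(n−1)))·∑_{i≠j} x_i y_i x_j y_j`. -/
theorem pruning_estimator_variance (n m : ℕ) (hn : 2 ≤ n) (hm1 : 1 ≤ m) (hmn : m ≤ n)
    (x y : Fin n → ℝ) :
    (let est : Finset (Fin n) → ℝ := fun S => ((n : ℝ) / (m : ℝ)) * ∑ i ∈ S, x i * y i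
     let 𝒮 : Finset (Finset (Fin n)) := Finset.powersetCard m (Finset.univ : Finset (Fin n))
     let μ : ℝ := (∑ S ∈ 𝒮, est S) / (𝒮.card : ℝ)
     (∑ S ∈ 𝒮, (est S - μ) ^ 2) / (𝒮.card : ℝ))
      = ((n : ℝ) / (m : ℝ) - 1) * ∑ i, (x i) ^ 2 * (y i) ^ 2
        + (((m : ℝ) - (n : ℝ)) / ((m : ℝ) * ((n : ℝ) - 1))) *
            ∑ i, ∑ j ∈ Finset.univ \ {i}, x i * y i * (x j * y j) := by
  simpa [expect_eq_sum_div_card] using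
    pruning_estimator_variance_general (s := univ) (by simpa using hn) hm1 (by simpa using hmn) x y
end

section
/- The RPS estimator of the inner product is unbiased: for any x, y ∈ ℝⁿ, any fixed hash function h : {1,…,n} → {1,…,m}, and signs g(1),…,g(n) that are independent and uniformly distributed on {−1,+1}, E[∑_{i=1}ⁿ ∑_{i'=1}ⁿ x_i y_{i'} g(i) g(i') 1(h(i)=h(i'))] = ∑_{i=1}ⁿ x_i y_i. -/
open Finset

/-!
Flipping the single sign `g(i)` negates `g(i) g(j)` for `j ≠ i`, so distinct signs are uncorrelated,
while `g(i)² = 1`. Hence the average over `g` of the quadratic form `∑ A i j g(i) g(j)` is the trace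
of `A`. The estimator is such a form, with `A i i = x i * y i` because `h i = h i` always holds.
-/

/-- The sign encoded by a bit; a uniform random assignment `s : ι → Bool` thus gives
independent uniform signs `boolSign R (s i)`. -/
def boolSign (R : Type*) [One R] [Neg R] (b : Bool) : R := if b then 1 else -1

/-- The RPS estimator of the inner product of `x` and `y` for a hash function `h` and signs `g`.
The signs are elements `g i` of `R`, not required to be `±1`. -/
def rpsEstimator {ι κ R : Type*} [Fintype ι] [DecidableEq κ] [NonAssocSemiring R]
    (h : ι → κ) (g x y : ι → R) : R :=
  ∑ i, ∑ j, x i * y j * g i * g j * (if h i = h j then 1 else 0)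

theorem boolSign_mul_self {R : Type*} [MulOneClass R] [HasDistribNeg R] (b : Bool) :
    boolSign R b * boolSign R b = 1 := by
  cases b <;> simp [boolSign]

theorem boolSign_not {R : Type*} [One R] [InvolutiveNeg R] (b : Bool) :
    boolSign R (!b) = -boolSign R b := by
  cases b <;> simp [boolSign]

section Uncorrelated

variable {Ω ι κ R : Type*} [Fintype Ω] [Fintype ι] [DecidableEq ι]

theorem sum_quadratic_eq_trace_mul [NonUnitalSemiring R] (A : Matrix ι ι R) {g : Ω → ι → R} {c : R}
    (hg : ∀ i j, ∑ ω, g ω i * g ω j = if i = j then c else 0) :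
    ∑ ω, ∑ i, ∑ j, A i j * (g ω i * g ω j) = A.trace * c := by
  calc ∑ ω, ∑ i, ∑ j, A i j * (g ω i * g ω j)
      = ∑ i, ∑ j, A i j * ∑ ω, g ω i * g ω j := by
        simp only [mul_sum]
        rw [sum_comm]
        exact sum_congr rfl fun i _ => sum_comm
    _ = ∑ i, A i i * c := by simp [hg]
    _ = A.trace * c := (sum_mul ..).symm

theorem sum_rpsEstimator [DecidableEq κ] [Semiring R] (h : ι → κ) (x y : ι → R)
    {g : Ω → ι → R} {c : R} (hg : ∀ i j, ∑ ω, g ω i * g ω j = if i = j then c else 0) :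
    ∑ ω, rpsEstimator h (g ω) x y = (∑ i, x i * y i) * c := by
  let A : Matrix ι ι R := .of fun i j => if h i = h j then x i * y j else 0
  have rps_eq_quadratic (ω : Ω) : rpsEstimator h (g ω) x y = ∑ i, ∑ j, A i j * (g ω i * g ω j) := by
    simp [rpsEstimator, A, mul_assoc]
  have trace_eq : A.trace = ∑ i, x i * y i := by simp [A, Matrix.trace]
  simp only [rps_eq_quadratic, sum_quadratic_eq_trace_mul A hg, trace_eq]

end Uncorrelated

section RandomSigns

variable {ι R : Type*} [Fintype ι] [DecidableEq ι]

theorem sum_boolSign_mul_boolSign_of_ne [NonAssocRing R] {i j : ι} (hij : i ≠ j) :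
    ∑ s : ι → Bool, boolSign R (s i) * boolSign R (s j) = 0 := by
  refine sum_involution (fun s _ => Function.update s i (!s i)) (fun s _ => ?_)
    (fun s _ _ hfixed => ?_) (fun _ _ => mem_univ _) (fun s _ => by simp)
  · simp [Function.update_of_ne hij.symm, boolSign_not]
  · simpa using congrFun hfixed i

theorem sum_boolSign_mul_boolSign [Ring R] (i j : ι) :
    ∑ s : ι → Bool, boolSign R (s i) * boolSign R (s j) =
      if i = j then 2 ^ Fintype.card ι else 0 := by
  split_ifs with hij
  · simp [hij, boolSign_mul_self]
  · exact sum_boolSign_mul_boolSign_of_ne hij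

theorem rps_estimator_unbiased_general {κ : Type*} [DecidableEq κ] [DivisionRing R]
    [NeZero (2 : R)] (x y : ι → R) (h : ι → κ) :
    (∑ s : ι → Bool, rpsEstimator h (fun i => boolSign R (s i)) x y) / 2 ^ Fintype.card ι =
      ∑ i, x i * y i := by
  rw [sum_rpsEstimator h x y sum_boolSign_mul_boolSign]
  exact mul_div_cancel_right₀ _ (pow_ne_zero _ two_ne_zero)

end RandomSigns

/-- The RPS estimator of the inner product is unbiased: for any `x, y ∈ ℝⁿ`, any fixed
hash `h : {1,…,n} → {1,…,m}`, and i.i.d. uniform random signs `g(i) ∈ {−1,+1}`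
(modelled by averaging over all sign assignments `s : Fin n → Bool`),
`E[∑_i ∑_{i'} x_i y_{i'} g(i) g(i') 1(h(i)=h(i'))] = ∑_i x_i y_i`. -/
theorem rps_estimator_unbiased (n m : ℕ) (x y : Fin n → ℝ) (h : Fin n → Fin m) :
    (∑ s : Fin n → Bool, ∑ i, ∑ i',
        x i * y i' * (if s i then (1 : ℝ) else -1) * (if s i' then (1 : ℝ) else -1) *
          (if h i = h i' then (1 : ℝ) else 0)) / ((2 : ℝ) ^ n)
      = ∑ i, x i * y i := by
  simpa only [rpsEstimator, boolSign, Fintype.card_fin] using rps_estimator_unbiased_general x y h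
end

section
/- In the permuted-fold hash model with n = k·m (k ≥ 1 an integer) and n ≥ 2, for any two distinct indices i ≠ j in {1,…,n}, the probability that they collide satisfies P[π(i) mod m = π(j) mod m] = (n−m)/(m(n−1)), where π is a uniformly random permutation of {1,…,n}. -/
open Finset

/-!
Since the symmetric group is 2-transitive, the number of permutations `π` for which `(π i, π j)`
lies in a given relation is the same for all pairs `i ≠ j`; since each `π` permutes the ordered
pairs of distinct points, double counting shows that `(π i, π j)` is uniform among these pairs.
Each point collides with exactly `k - 1` of the other `n - 1` points, and `n = k m` turns
`(k - 1) / (n - 1)` into `(n - m) / (m (n - 1))`.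
-/

section PermutationPairs

variable {α : Type*} [Fintype α] (r : α → α → Prop) [DecidableRel r]

lemma card_offDiag_rel_perm_apply (π : Equiv.Perm α) :
    #{p ∈ (univ : Finset α).offDiag | r (π p.1) (π p.2)} =
      #{p ∈ (univ : Finset α).offDiag | r p.1 p.2} :=
  card_equiv (π.prodCongr π) fun p => by simp

variable [DecidableEq α]

lemma card_perm_rel_apply_eq_of_ne {i j i' j' : α} (hij : i ≠ j) (hij' : i' ≠ j') :
    #{π : Equiv.Perm α | r (π i) (π j)} = #{π : Equiv.Perm α | r (π i') (π j')} := by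
  obtain ⟨σ, hσi, hσj⟩ := MulAction.is_two_pretransitive_iff.mp
    (Equiv.Perm.isMultiplyPretransitive α 2) hij' hij
  rw [Equiv.Perm.smul_def] at hσi hσj
  exact card_equiv (Equiv.mulRight σ) fun π => by simp [hσi, hσj]

theorem card_offDiag_mul_card_perm_rel_apply {i j : α} (hij : i ≠ j) :
    #(univ : Finset α).offDiag * #{π : Equiv.Perm α | r (π i) (π j)} =
      Fintype.card (Equiv.Perm α) * #{p ∈ (univ : Finset α).offDiag | r p.1 p.2} :=
  card_mul_eq_card_mul (fun (p : α × α) (π : Equiv.Perm α) => r (π p.1) (π p.2))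
    (fun _ hp => card_perm_rel_apply_eq_of_ne r (mem_offDiag.mp hp).2.2 hij)
    (fun π _ => card_offDiag_rel_perm_apply r π)

end PermutationPairs

section BalancedMaps

variable {α β : Type*} [Fintype α] [DecidableEq β] {f : α → β} {k : ℕ}

lemma card_offDiag_map_eq_of_card_fiber (hf : ∀ x, #{a | f a = f x} = k) :
    #{p ∈ (univ : Finset α).offDiag | f p.1 = f p.2} = Fintype.card α * (k - 1) := by
  classical
  have collisions_with (a : α) :
      {p ∈ (univ : Finset α).offDiag | f p.1 = f p.2 ∧ p.1 = a} =
        {a} ×ˢ ({b | f b = f a} : Finset α).erase a := by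
    ext ⟨x, y⟩
    grind
  have card_collisions_with (a : α) :
      #{p ∈ (univ : Finset α).offDiag | f p.1 = f p.2 ∧ p.1 = a} = k - 1 := by
    rw [collisions_with, card_product, card_singleton, one_mul,
      card_erase_of_mem (by simp), hf]
  rw [card_eq_sum_card_fiberwise (t := univ) (f := Prod.fst) (by simp)]
  simp only [filter_filter, card_collisions_with, sum_const, card_univ, smul_eq_mul]

lemma card_eq_card_mul_of_card_fiber [Fintype β] (hf : ∀ b, #{a | f a = b} = k) :
    Fintype.card α = Fintype.card β * k :=
  calc
    Fintype.card α = ∑ b, #{a | f a = b} := card_eq_sum_card_fiberwise (by simp)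
    _ = Fintype.card β * k := by simp only [hf, sum_const, card_univ, smul_eq_mul]

variable [DecidableEq α]

lemma card_perm_map_apply_eq_mul (hf : ∀ x, #{a | f a = f x} = k) {i j : α} (hij : i ≠ j) :
    #{π : Equiv.Perm α | f (π i) = f (π j)} * (Fintype.card α - 1) =
      Fintype.card (Equiv.Perm α) * (k - 1) := by
  have double_count := card_offDiag_mul_card_perm_rel_apply (fun x y => f x = f y) hij
  rw [card_offDiag_map_eq_of_card_fiber hf, offDiag_card, card_univ, ← Nat.mul_sub_one]
    at double_count
  refine Nat.eq_of_mul_eq_mul_left (Fintype.card_pos_iff.mpr ⟨i⟩) ?_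
  linarith

theorem permuted_fold_collision_probability_general [Fintype β]
    (hf : ∀ b, #{a | f a = b} = k) {i j : α} (hij : i ≠ j) :
    (#{π : Equiv.Perm α | f (π i) = f (π j)} : ℝ) / Fintype.card (Equiv.Perm α) =
      ((Fintype.card α : ℝ) - Fintype.card β) /
        (Fintype.card β * ((Fintype.card α : ℝ) - 1)) := by
  have one_lt_card : 1 < Fintype.card α := Fintype.one_lt_card_iff.mpr ⟨i, j, hij⟩
  have card_eq : (Fintype.card α : ℝ) = Fintype.card β * k := by
    exact_mod_cast card_eq_card_mul_of_card_fiber hf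
  have one_le_k : 1 ≤ k := hf (f i) ▸ card_pos.mpr ⟨i, by simp⟩
  have count := congrArg (Nat.cast : ℕ → ℝ)
    (card_perm_map_apply_eq_mul (fun x => hf (f x)) hij)
  push_cast [Nat.cast_sub one_lt_card.le, Nat.cast_sub one_le_k] at count
  have card_β_ne : (Fintype.card β : ℝ) ≠ 0 := by
    exact_mod_cast (Fintype.card_pos_iff.mpr ⟨f i⟩).ne'
  have card_α_sub_ne : (Fintype.card α : ℝ) - 1 ≠ 0 :=
    sub_ne_zero.mpr (by exact_mod_cast one_lt_card.ne')
  rw [div_eq_div_iff (by positivity) (mul_ne_zero card_β_ne card_α_sub_ne)]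
  linear_combination (Fintype.card β : ℝ) * count -
    (Fintype.card (Equiv.Perm α) : ℝ) * card_eq

end BalancedMaps

lemma card_fiber_modNat (k m : ℕ) (c : Fin m) : #{x : Fin (k * m) | x.modNat = c} = k :=
  calc
    #{x : Fin (k * m) | x.modNat = c} = #((univ : Finset (Fin k)) ×ˢ {c}) :=
      card_equiv finProdFinEquiv.symm fun x => by simp [eq_comm]
    _ = k := by simp

/-- In the permuted-fold hash model with `n = k·m` (`k ≥ 1`) and `n ≥ 2`, for distinct
indices `i ≠ j`, the collision probability over a uniformly random permutation `π` of
`{1,…,n}` satisfies `P[π(i) mod m = π(j) mod m] = (n−m)/(m(n−1))`. -/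
theorem permuted_fold_collision_probability (n m k : ℕ) (hk : 1 ≤ k) (hnm : n = k * m)
    (hn : 2 ≤ n) (i j : Fin n) (hij : i ≠ j) :
    (((Finset.univ.filter
        (fun π : Equiv.Perm (Fin n) => (π i : ℕ) % m = (π j : ℕ) % m)).card : ℝ)) /
      ((Fintype.card (Equiv.Perm (Fin n))) : ℝ)
      = ((n : ℝ) - (m : ℝ)) / ((m : ℝ) * ((n : ℝ) - 1)) := by
  subst hnm
  simpa only [Fin.ext_iff, Fin.coe_modNat, Fintype.card_fin] using
    permuted_fold_collision_probability_general (card_fiber_modNat k m) hij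
end

section
/- Let X_1,…,X_n, Y_1,…,Y_n be mutually independent real random variables with E[X_i] = E[Y_i] = 0 and E[X_i²] = E[Y_i²] = σ_i² < ∞ for each i, and let n ≥ 2 and 1 ≤ m ≤ n. Then the expectation over the data of the pruning-estimator variance satisfies E[(n/m − 1)·∑_{i=1}ⁿ X_i² Y_i² + ((m−n)/(m(n−1)))·∑_{i≠j} X_i Y_i X_j Y_j] = ((n−m)/m)·∑_{i=1}ⁿ σ_i⁴. -/
open Finset MeasureTheory ProbabilityTheory

/-!
Put `Z_i = X_i Y_i`. Each `Z_i` is square integrable, and for `i ≠ j` the four factors of `Z_i Z_j`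
are independent with `X_i` centred, so the `Z_i` are pairwise orthogonal in `L²`. The cross terms
therefore vanish whatever their coefficient, and `E[Z_i²] = E[X_i²] E[Y_i²]`.
-/

section

variable {Ω ι 𝕜 : Type*} [MeasurableSpace Ω] {P : Measure Ω}

theorem memLp_fun_mul_of_indepFun [NormedField 𝕜] [MeasurableSpace 𝕜] [OpensMeasurableSpace 𝕜]
    {X Y : Ω → 𝕜} {p : ENNReal} (hXY : IndepFun X Y P) (hX : MemLp X p P)
    (hY : MemLp Y p P) : MemLp (fun ω ↦ X ω * Y ω) p P := by
  have hmeas : AEStronglyMeasurable (fun ω ↦ X ω * Y ω) P :=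
    hX.aestronglyMeasurable.mul hY.aestronglyMeasurable
  obtain rfl | hp₀ := eq_or_ne p 0
  · rwa [memLp_zero_iff_aestronglyMeasurable]
  obtain rfl | hp := eq_or_ne p ⊤
  · exact hY.mul (r := ⊤) hX
  have hpow : Measurable fun x : 𝕜 ↦ ‖x‖ ^ p.toReal := measurable_norm.pow_const _
  rw [← integrable_norm_rpow_iff hmeas hp₀ hp]
  simp only [norm_mul, Real.mul_rpow (norm_nonneg _) (norm_nonneg _)]
  exact (hXY.comp hpow hpow).integrable_mul
    (hX.integrable_norm_rpow hp₀ hp) (hY.integrable_norm_rpow hp₀ hp)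

theorem integral_mul_pow_of_indepFun [RCLike 𝕜] {X Y : Ω → 𝕜} (hXY : IndepFun X Y P)
    (hX : AEMeasurable X P) (hY : AEMeasurable Y P) (k : ℕ) :
    ∫ ω, (X ω * Y ω) ^ k ∂P = (∫ ω, X ω ^ k ∂P) * ∫ ω, Y ω ^ k ∂P := by
  have hpow : Continuous fun x : 𝕜 ↦ x ^ k := continuous_pow k
  simp only [mul_pow]
  exact hXY.integral_fun_comp_mul_comp hX hY hpow.aestronglyMeasurable
    hpow.aestronglyMeasurable

theorem integral_mul_mul_mul_of_iIndepFun [RCLike 𝕜] {f : ι → Ω → 𝕜} (hf : iIndepFun f P)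
    (hmeas : ∀ i, AEMeasurable (f i) P) {i j k l : ι} (hij : i ≠ j) (hik : i ≠ k) (hil : i ≠ l)
    (hjk : j ≠ k) (hjl : j ≠ l) (hkl : k ≠ l) :
    ∫ ω, f i ω * f j ω * (f k ω * f l ω) ∂P = P[f i] * P[f j] * (P[f k] * P[f l]) := by
  have hsm (i : ι) : AEStronglyMeasurable (f i) P := (hmeas i).aestronglyMeasurable
  calc ∫ ω, f i ω * f j ω * (f k ω * f l ω) ∂P
      = (∫ ω, f i ω * f j ω ∂P) * ∫ ω, f k ω * f l ω ∂P :=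
        (hf.indepFun_mul_mul₀ hmeas i j k l hik hil hjk hjl).integral_fun_mul_eq_mul_integral
          ((hsm i).mul (hsm j)) ((hsm k).mul (hsm l))
    _ = P[f i] * P[f j] * (P[f k] * P[f l]) := by
        rw [(hf.indepFun hij).integral_fun_mul_eq_mul_integral (hsm i) (hsm j),
          (hf.indepFun hkl).integral_fun_mul_eq_mul_integral (hsm k) (hsm l)]

theorem integral_sum_sq_add_sum_sdiff_of_pairwise_orthogonal [DecidableEq ι] {s : Finset ι}
    {Z : ι → Ω → ℝ} (hZ : ∀ i ∈ s, MemLp (Z i) 2 P)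
    (horth : (s : Set ι).Pairwise fun i j ↦ ∫ ω, Z i ω * Z j ω ∂P = 0) (a b : ℝ) :
    ∫ ω, (a * ∑ i ∈ s, Z i ω ^ 2 + b * ∑ i ∈ s, ∑ j ∈ s \ {i}, Z i ω * Z j ω) ∂P
      = a * ∑ i ∈ s, ∫ ω, Z i ω ^ 2 ∂P := by
  have hsq : ∀ i ∈ s, Integrable (fun ω ↦ Z i ω ^ 2) P := fun i hi ↦ (hZ i hi).integrable_sq
  have hmul : ∀ i ∈ s, ∀ j ∈ s \ {i}, Integrable (fun ω ↦ Z i ω * Z j ω) P :=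
    fun i hi j hj ↦ (hZ i hi).integrable_mul (hZ j (sdiff_subset hj))
  have hrow : ∀ i ∈ s, Integrable (fun ω ↦ ∑ j ∈ s \ {i}, Z i ω * Z j ω) P :=
    fun i hi ↦ integrable_finsetSum _ (hmul i hi)
  have hrow_zero : ∀ i ∈ s, ∫ ω, ∑ j ∈ s \ {i}, Z i ω * Z j ω ∂P = 0 := fun i hi ↦ by
    rw [integral_finsetSum _ (hmul i hi)]
    refine sum_eq_zero fun j hj ↦ ?_
    obtain ⟨hjs, hji⟩ : j ∈ s ∧ j ≠ i := by simpa using hj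
    exact horth hi hjs hji.symm
  rw [integral_add ((integrable_finsetSum s hsq).const_mul a)
      ((integrable_finsetSum s hrow).const_mul b), integral_const_mul, integral_const_mul,
    integral_finsetSum s hsq, integral_finsetSum s hrow, sum_eq_zero hrow_zero, mul_zero, add_zero]

theorem expected_pruning_variance_general [Fintype ι] [DecidableEq ι] {X Y : ι → Ω → ℝ}
    (hindep : iIndepFun (Sum.elim X Y) P) (hX : ∀ i, MemLp (X i) 2 P)
    (hY : ∀ i, MemLp (Y i) 2 P) (hXmean : ∀ i, ∫ ω, X i ω ∂P = 0) (a b : ℝ) :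
    ∫ ω, (a * ∑ i, X i ω ^ 2 * Y i ω ^ 2
        + b * ∑ i, ∑ j ∈ univ \ {i}, X i ω * Y i ω * (X j ω * Y j ω)) ∂P
      = a * ∑ i, (∫ ω, X i ω ^ 2 ∂P) * ∫ ω, Y i ω ^ 2 ∂P := by
  have hXY (i : ι) : IndepFun (X i) (Y i) P := hindep.indepFun Sum.inl_ne_inr
  have hmeas : ∀ k, AEMeasurable (Sum.elim X Y k) P :=
    Sum.rec (fun i ↦ (hX i).aemeasurable) fun i ↦ (hY i).aemeasurable
  have horth : Pairwise fun i j ↦ ∫ ω, X i ω * Y i ω * (X j ω * Y j ω) ∂P = 0 := fun i j hij ↦ by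
    have hprod := integral_mul_mul_mul_of_iIndepFun hindep hmeas (i := .inl i) (j := .inr i)
      (k := .inl j) (l := .inr j) (by simp) (by simpa) (by simp) (by simp) (by simpa) (by simp)
    simpa [hXmean] using hprod
  simp only [← mul_pow]
  rw [integral_sum_sq_add_sum_sdiff_of_pairwise_orthogonal
    (fun i _ ↦ memLp_fun_mul_of_indepFun (hXY i) (hX i) (hY i)) (horth.set_pairwise _)]
  simp only [fun i ↦ integral_mul_pow_of_indepFun (hXY i) (hX i).aemeasurable (hY i).aemeasurable 2]

end

/-- Expected (over mean-zero independent data `X_1,…,X_n,Y_1,…,Y_n` with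
`E[X_i] = E[Y_i] = 0`, `E[X_i²] = E[Y_i²] = σ_i² < ∞`) variance of the pruning
inner-product estimator:
`E[(n/m − 1)·∑ X_i² Y_i² + ((m−n)/(m(n−1)))·∑_{i≠j} X_i Y_i X_j Y_j] = ((n−m)/m)·∑ σ_i⁴`. -/
theorem expected_pruning_variance {Ω : Type*} [MeasurableSpace Ω] (P : Measure Ω)
    [IsProbabilityMeasure P] (n m : ℕ) (hn : 2 ≤ n) (hm1 : 1 ≤ m) (hmn : m ≤ n)
    (X Y : Fin n → Ω → ℝ) (σ : Fin n → ℝ)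
    (hindep : iIndepFun (m := fun _ : Fin n ⊕ Fin n => (inferInstance : MeasurableSpace ℝ))
      (Sum.elim X Y) P)
    (hXint : ∀ i, Integrable (X i) P) (hYint : ∀ i, Integrable (Y i) P)
    (hX2int : ∀ i, Integrable (fun ω => (X i ω) ^ 2) P)
    (hY2int : ∀ i, Integrable (fun ω => (Y i ω) ^ 2) P)
    (hXmean : ∀ i, ∫ ω, X i ω ∂P = 0) (hYmean : ∀ i, ∫ ω, Y i ω ∂P = 0)
    (hXvar : ∀ i, ∫ ω, (X i ω) ^ 2 ∂P = (σ i) ^ 2)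
    (hYvar : ∀ i, ∫ ω, (Y i ω) ^ 2 ∂P = (σ i) ^ 2) :
    ∫ ω, (((n : ℝ) / (m : ℝ) - 1) * ∑ i, (X i ω) ^ 2 * (Y i ω) ^ 2
        + (((m : ℝ) - (n : ℝ)) / ((m : ℝ) * ((n : ℝ) - 1))) *
            ∑ i, ∑ j ∈ Finset.univ \ {i}, X i ω * Y i ω * (X j ω * Y j ω)) ∂P
      = (((n : ℝ) - (m : ℝ)) / (m : ℝ)) * ∑ i, (σ i) ^ 4 := by
  have hX2 (i : Fin n) : MemLp (X i) 2 P :=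
    (memLp_two_iff_integrable_sq (hXint i).aestronglyMeasurable).2 (hX2int i)
  have hY2 (i : Fin n) : MemLp (Y i) 2 P :=
    (memLp_two_iff_integrable_sq (hYint i).aestronglyMeasurable).2 (hY2int i)
  have hm : (m : ℝ) ≠ 0 := by positivity
  rw [expected_pruning_variance_general hindep hX2 hY2 hXmean, div_sub_one hm]
  simp only [hXvar, hYvar, ← pow_add]
end

section
/- Let n ≥ 2, 1 ≤ m < n, and σ_1,…,σ_n ≥ 0. Then ((n−m)/m)·∑_{i=1}ⁿ σ_i⁴ ≥ (1/m)·((n−m)/(n−1))·∑_{i≠j} σ_i² σ_j², with equality if and only if σ_1 = σ_2 = … = σ_n. Consequently the expected (over mean-zero independent data with coordinate standard deviations σ_i) variance of the pruning inner-product estimator is at least that of the RPS inner-product estimator, with equality exactly when all σ_i are equal. -/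
open Finset

/-!
Both expected variances are quadratic forms in the coordinate variances `v i = σ i ^ 2`. The
off-diagonal sum is the square of `∑ i, v i` minus the diagonal, so the pruning variance exceeds
the RPS variance by a positive multiple of `n * ∑ i, v i ^ 2 - (∑ i, v i) ^ 2`. Up to a factor `2`
this is the sum of all `(v i - v j) ^ 2`: it is nonnegative, and zero exactly when `v` is constant.
-/

section Sums

variable {ι R : Type*} (s : Finset ι)

lemma sum_sum_sdiff_singleton_mul [DecidableEq ι] [NonUnitalNonAssocRing R] (f g : ι → R) :
    ∑ i ∈ s, ∑ j ∈ s \ {i}, f i * g j = (∑ i ∈ s, f i) * ∑ j ∈ s, g j - ∑ i ∈ s, f i * g i := by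
  rw [sum_mul_sum, ← sum_sub_distrib]
  refine sum_congr rfl fun i hi ↦ ?_
  rw [sdiff_singleton_eq_erase, sum_erase_eq_sub hi]

lemma sum_sum_sub_sq [CommRing R] (f : ι → R) :
    ∑ i ∈ s, ∑ j ∈ s, (f i - f j) ^ 2 = 2 * (#s * ∑ i ∈ s, f i ^ 2 - (∑ i ∈ s, f i) ^ 2) := by
  simp only [sub_sq, sum_add_distrib, sum_sub_distrib, ← mul_sum, ← sum_mul, sum_const,
    nsmul_eq_mul]
  ring

variable [CommRing R] [LinearOrder R] [IsStrictOrderedRing R]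

lemma sum_sum_sub_sq_eq_zero_iff (f : ι → R) :
    ∑ i ∈ s, ∑ j ∈ s, (f i - f j) ^ 2 = 0 ↔ ∀ i ∈ s, ∀ j ∈ s, f i = f j := by
  rw [sum_eq_zero_iff_of_nonneg fun i _ ↦ sum_nonneg fun j _ ↦ sq_nonneg _]
  refine forall₂_congr fun i _ ↦ ?_
  simp only [sum_eq_zero_iff_of_nonneg fun j _ ↦ sq_nonneg (f i - f j), sq_eq_zero_iff, sub_eq_zero]

lemma card_mul_sum_sq_eq_sq_sum_iff (f : ι → R) :
    #s * ∑ i ∈ s, f i ^ 2 = (∑ i ∈ s, f i) ^ 2 ↔ ∀ i ∈ s, ∀ j ∈ s, f i = f j := by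
  rw [← sum_sum_sub_sq_eq_zero_iff, sum_sum_sub_sq, mul_eq_zero_iff_left two_ne_zero, sub_eq_zero]

end Sums

section Variances

variable {ι K : Type*} (s : Finset ι)

/-- The expected variance of the pruning inner-product estimator that keeps `m` of the coordinates
in `s`, as a function of the variances `v i` (the paper's `σ_i²`) of the data coordinates. -/
def expectedPruningVariance [Field K] (m : K) (v : ι → K) : K :=
  (#s - m) / m * ∑ i ∈ s, v i ^ 2

/-- The expected variance of the RPS inner-product estimator that compresses the coordinates in `s`
to dimension `m`, as a function of the variances `v i` (the paper's `σ_i²`) of the data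
coordinates. -/
def expectedRPSVariance [DecidableEq ι] [Field K] (m : K) (v : ι → K) : K :=
  1 / m * ((#s - m) / (#s - 1)) * ∑ i ∈ s, ∑ j ∈ s \ {i}, v i * v j

lemma expectedPruningVariance_sub_expectedRPSVariance [DecidableEq ι] [Field K]
    (hs : (#s : K) ≠ 1) (m : K) (v : ι → K) :
    expectedPruningVariance s m v - expectedRPSVariance s m v =
      (#s - m) / (m * (#s - 1)) * (#s * ∑ i ∈ s, v i ^ 2 - (∑ i ∈ s, v i) ^ 2) := by
  have hs' : (#s : K) - 1 ≠ 0 := sub_ne_zero.mpr hs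
  simp only [expectedPruningVariance, expectedRPSVariance, sum_sum_sdiff_singleton_mul, ← sq]
  field_simp
  ring

theorem expected_pruning_variance_ge_rps_general [DecidableEq ι] [Field K] [LinearOrder K]
    [IsStrictOrderedRing K] (hs : 1 < #s) {m : K} (hm : 0 < m) (hms : m < #s) (v : ι → K) :
    expectedRPSVariance s m v ≤ expectedPruningVariance s m v ∧
      (expectedPruningVariance s m v = expectedRPSVariance s m v ↔
        ∀ i ∈ s, ∀ j ∈ s, v i = v j) := by
  have hs' : (1 : K) < #s := mod_cast hs
  have hc : 0 < (#s - m) / (m * (#s - 1)) :=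
    div_pos (sub_pos.mpr hms) (mul_pos hm (sub_pos.mpr hs'))
  constructor
  · rw [← sub_nonneg, expectedPruningVariance_sub_expectedRPSVariance s hs'.ne']
    exact mul_nonneg hc.le (sub_nonneg.mpr sq_sum_le_card_mul_sum_sq)
  · rw [← sub_eq_zero, expectedPruningVariance_sub_expectedRPSVariance s hs'.ne',
      mul_eq_zero_iff_left hc.ne', sub_eq_zero, card_mul_sum_sq_eq_sq_sum_iff]

end Variances

/-- For `n ≥ 2`, `1 ≤ m < n` and nonnegative `σ_1,…,σ_n`:
`((n−m)/m)·∑ σ_i⁴ ≥ (1/m)·((n−m)/(n−1))·∑_{i≠j} σ_i² σ_j²`, with equality iff all the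
`σ_i` are equal; i.e. the expected pruning-estimator variance is at least the expected
RPS-estimator variance, with equality exactly when all `σ_i` coincide. -/
theorem expected_pruning_variance_ge_rps (n m : ℕ) (hn : 2 ≤ n) (hm1 : 1 ≤ m) (hmn : m < n)
    (σ : Fin n → ℝ) (hσ : ∀ i, 0 ≤ σ i) :
    (1 / (m : ℝ)) * (((n : ℝ) - (m : ℝ)) / ((n : ℝ) - 1)) *
        ∑ i, ∑ j ∈ Finset.univ \ {i}, (σ i) ^ 2 * (σ j) ^ 2
      ≤ (((n : ℝ) - (m : ℝ)) / (m : ℝ)) * ∑ i, (σ i) ^ 4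
    ∧ ((((n : ℝ) - (m : ℝ)) / (m : ℝ)) * ∑ i, (σ i) ^ 4
        = (1 / (m : ℝ)) * (((n : ℝ) - (m : ℝ)) / ((n : ℝ) - 1)) *
            ∑ i, ∑ j ∈ Finset.univ \ {i}, (σ i) ^ 2 * (σ j) ^ 2
        ↔ ∀ i j, σ i = σ j) := by
  have h := expected_pruning_variance_ge_rps_general univ (m := (m : ℝ)) (by rwa [card_fin])
    (mod_cast hm1) (by rwa [card_fin, Nat.cast_lt]) fun i ↦ σ i ^ 2
  simpa only [expectedPruningVariance, expectedRPSVariance, card_fin, ← pow_mul, Nat.reduceMul,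
    mem_univ, forall_const, pow_left_inj₀ (hσ _) (hσ _) two_ne_zero] using h
end

section
/- Stability of RPS with gradient scaling (Theorem 2): let F : ℝⁿ → ℝ be differentiable with L-Lipschitz gradient (Euclidean norm), let h : {1,…,n} → {1,…,m} be surjective, g : {1,…,n} → {−1,+1}, λ_1,…,λ_n > 0, let A : ℝ^m → ℝⁿ be the linear map (Aψ)_i = g(i)·λ_i·ψ_{h(i)}, and define the gradient scaler Γ(j) = 1/(∑_{i : h(i)=j} λ_i²) for j = 1,…,m. Then for any 0 < η ≤ 2/L and any ψ ∈ ℝ^m, the scaled gradient-descent step in parameter space, θ' = θ − η·A(Γ ⊙ Aᵀ∇F(θ)) with θ = Aψ (where ⊙ denotes coordinatewise multiplication by Γ), satisfies F(θ') ≤ F(θ); thus the stability range of the learning rate is maintained at (0, 2/L) under compression. -/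
open Finset

/-!
The adjoint satisfies `AᵀA = diag(S)` with `S j = ∑_{h i = j} λ_i²`. Where `S j` is nonzero, `Γ`
inverts it; where it vanishes, so does row `j` of `Aᵀ`. Hence `s = Γ ⊙ Aᵀv` solves the normal
equations `AᵀAs = Aᵀv`, that is, `As` is the orthogonal projection of `v` onto the range of `A`,
and `‖As‖² = ⟪v, As⟫`. With `v = ∇F(θ)`, the descent lemma then bounds the change of `F` along
`-η • As` by `-η (1 - ηL/2) ‖As‖²`.
-/

open ContinuousLinearMap InnerProductSpace
open scoped NNReal

section LipschitzDerivative

variable {E G : Type*} [NormedAddCommGroup E] [NormedSpace ℝ E]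
  [NormedAddCommGroup G] [NormedSpace ℝ G]

theorem norm_sub_sub_fderiv_le_of_lipschitzWith_fderiv {f : E → G} {K : ℝ≥0}
    (hf : Differentiable ℝ f) (hlip : LipschitzWith K (fderiv ℝ f)) (x u : E) :
    ‖f (x + u) - f x - fderiv ℝ f x u‖ ≤ K / 2 * ‖u‖ ^ 2 := by
  let remainder : ℝ → G := fun t => f (x + t • u) - f x - t • fderiv ℝ f x u
  have hderiv (t : ℝ) :
      HasDerivAt remainder (fderiv ℝ f (x + t • u) u - fderiv ℝ f x u) t := by
    have hline : HasDerivAt (fun t : ℝ => x + t • u) u t := by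
      simpa using ((hasDerivAt_id t).smul_const u).const_add x
    have hlinear : HasDerivAt (fun t : ℝ => t • fderiv ℝ f x u) (fderiv ℝ f x u) t := by
      simpa using (hasDerivAt_id t).smul_const (fderiv ℝ f x u)
    exact (((hf _).hasFDerivAt.comp_hasDerivAt t hline).sub_const (f x)).sub hlinear
  have hbound_deriv (t : ℝ) :
      HasDerivAt (fun t : ℝ => K / 2 * ‖u‖ ^ 2 * t ^ 2) (K * ‖u‖ ^ 2 * t) t :=
    ((hasDerivAt_pow 2 t).const_mul (K / 2 * ‖u‖ ^ 2)).congr_deriv (by norm_num; ring)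
  have hderiv_le (t : ℝ) (ht : 0 ≤ t) :
      ‖fderiv ℝ f (x + t • u) u - fderiv ℝ f x u‖ ≤ K * ‖u‖ ^ 2 * t :=
    calc ‖fderiv ℝ f (x + t • u) u - fderiv ℝ f x u‖
        ≤ ‖fderiv ℝ f (x + t • u) - fderiv ℝ f x‖ * ‖u‖ :=
          (fderiv ℝ f (x + t • u) - fderiv ℝ f x).le_opNorm u
      _ ≤ K * ‖x + t • u - x‖ * ‖u‖ := by gcongr; exact hlip.norm_sub_le _ _
      _ = K * ‖u‖ ^ 2 * t := by
          rw [add_sub_cancel_left, norm_smul, Real.norm_of_nonneg ht]; ring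
  have hremainder : ‖remainder 1‖ ≤ K / 2 * ‖u‖ ^ 2 * 1 ^ 2 :=
    image_norm_le_of_norm_deriv_right_le_deriv_boundary
      (fun t _ => (hderiv t).continuousAt.continuousWithinAt)
      (fun t _ => (hderiv t).hasDerivWithinAt) (by simp [remainder]) hbound_deriv
      (fun t ht => hderiv_le t ht.1) (Set.right_mem_Icc.2 zero_le_one)
  simpa [remainder] using hremainder

end LipschitzDerivative

section GradientDescent

variable {E : Type*} [NormedAddCommGroup E] [InnerProductSpace ℝ E] [CompleteSpace E]
  {F : E → ℝ} {K : ℝ≥0}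

theorem lipschitzWith_fderiv_of_lipschitzWith_gradient (hlip : LipschitzWith K (gradient F)) :
    LipschitzWith K (fderiv ℝ F) := by
  simpa only [toDual_comp_gradient, one_mul] using (toDual ℝ E).lipschitz.comp hlip

theorem le_add_inner_gradient_add_of_lipschitzWith_gradient (hF : Differentiable ℝ F)
    (hlip : LipschitzWith K (gradient F)) (x u : E) :
    F (x + u) ≤ F x + inner ℝ (gradient F x) u + K / 2 * ‖u‖ ^ 2 := by
  have hremainder := norm_sub_sub_fderiv_le_of_lipschitzWith_fderiv hF
    (lipschitzWith_fderiv_of_lipschitzWith_gradient hlip) x u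
  rw [← inner_gradient_left] at hremainder
  linarith [Real.le_norm_self (F (x + u) - F x - inner ℝ (gradient F x) u)]

theorem apply_sub_smul_le_of_norm_sq_le_inner_gradient (hF : Differentiable ℝ F)
    (hlip : LipschitzWith K (gradient F)) {η : ℝ} (hη₀ : 0 ≤ η) (hη : η * K ≤ 2) {x d : E}
    (hd : ‖d‖ ^ 2 ≤ inner ℝ (gradient F x) d) : F (x - η • d) ≤ F x :=
  calc F (x - η • d)
      ≤ F x - η * inner ℝ (gradient F x) d + K / 2 * (η * ‖d‖) ^ 2 := by
        simpa [← sub_eq_add_neg, inner_smul_right, norm_smul, abs_of_nonneg hη₀] using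
          le_add_inner_gradient_add_of_lipschitzWith_gradient hF hlip x (-(η • d))
    _ ≤ F x - η * ‖d‖ ^ 2 + K / 2 * (η * ‖d‖) ^ 2 := by gcongr
    _ = F x - η * (1 - η * K / 2) * ‖d‖ ^ 2 := by ring
    _ ≤ F x := sub_le_self _ <| mul_nonneg (mul_nonneg hη₀ (by linarith)) (sq_nonneg _)

end GradientDescent

theorem norm_apply_sq_eq_re_inner_of_adjoint_apply_eq {𝕜 E H : Type*} [RCLike 𝕜]
    [NormedAddCommGroup E] [InnerProductSpace 𝕜 E] [CompleteSpace E]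
    [NormedAddCommGroup H] [InnerProductSpace 𝕜 H] [CompleteSpace H]
    {A : E →L[𝕜] H} {s : E} {v : H} (hs : adjoint A (A s) = adjoint A v) :
    ‖A s‖ ^ 2 = RCLike.re (inner 𝕜 v (A s)) := by
  rw [← inner_self_eq_norm_sq (𝕜 := 𝕜), ← adjoint_inner_left, hs, adjoint_inner_left]

section WeightedPullback

variable {ι κ : Type*} [Fintype ι] [Fintype κ] [DecidableEq κ] {w : ι → ℝ} {h : ι → κ}
  {A : EuclideanSpace ℝ κ →L[ℝ] EuclideanSpace ℝ ι}

theorem adjoint_apply_eq_sum_fiber (hA : ∀ ψ i, A ψ i = w i * ψ (h i))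
    (v : EuclideanSpace ℝ ι) (j : κ) :
    adjoint A v j = ∑ i with h i = j, w i * v i :=
  calc adjoint A v j = inner ℝ (EuclideanSpace.single j 1) (adjoint A v) := by
        simp [EuclideanSpace.inner_single_left]
    _ = inner ℝ (A (EuclideanSpace.single j 1)) v := adjoint_inner_right ..
    _ = ∑ i with h i = j, w i * v i := by
        simp [PiLp.inner_apply, hA, sum_filter, mul_comm]

theorem adjoint_apply_apply_eq_sum_sq_mul (hA : ∀ ψ i, A ψ i = w i * ψ (h i))
    (s : EuclideanSpace ℝ κ) (j : κ) :
    adjoint A (A s) j = (∑ i with h i = j, w i ^ 2) * s j := by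
  rw [adjoint_apply_eq_sum_fiber hA, sum_mul]
  refine sum_congr rfl fun i hi => ?_
  rw [hA, (mem_filter.1 hi).2]
  ring

theorem adjoint_apply_eq_zero_of_sum_sq_eq_zero (hA : ∀ ψ i, A ψ i = w i * ψ (h i))
    (v : EuclideanSpace ℝ ι) {j : κ} (hj : ∑ i with h i = j, w i ^ 2 = 0) :
    adjoint A v j = 0 := by
  have hw : ∀ i ∈ univ.filter (h · = j), w i ^ 2 = 0 :=
    (sum_eq_zero_iff_of_nonneg fun i _ => sq_nonneg (w i)).1 hj
  rw [adjoint_apply_eq_sum_fiber hA]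
  exact sum_eq_zero fun i hi => by rw [pow_eq_zero_iff two_ne_zero |>.1 (hw i hi), zero_mul]

theorem adjoint_apply_scaled_adjoint_eq_adjoint (hA : ∀ ψ i, A ψ i = w i * ψ (h i))
    {Γ : κ → ℝ}
    (hΓ : ∀ j, (∑ i with h i = j, w i ^ 2) ≠ 0 → Γ j = 1 / ∑ i with h i = j, w i ^ 2)
    (v : EuclideanSpace ℝ ι) :
    adjoint A (A (WithLp.toLp 2 fun j => Γ j * adjoint A v j)) = adjoint A v := by
  ext j
  rw [adjoint_apply_apply_eq_sum_sq_mul hA, PiLp.toLp_apply]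
  by_cases hj : ∑ i with h i = j, w i ^ 2 = 0
  · rw [hj, zero_mul, adjoint_apply_eq_zero_of_sum_sq_eq_zero hA v hj]
  · rw [hΓ j hj, ← mul_assoc, mul_one_div_cancel hj, one_mul]

theorem rps_gradient_scaling_stable_general {F : EuclideanSpace ℝ ι → ℝ} {K : ℝ≥0}
    (hF : Differentiable ℝ F) (hlip : LipschitzWith K (gradient F))
    (hA : ∀ ψ i, A ψ i = w i * ψ (h i)) {Γ : κ → ℝ}
    (hΓ : ∀ j, (∑ i with h i = j, w i ^ 2) ≠ 0 → Γ j = 1 / ∑ i with h i = j, w i ^ 2)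
    {η : ℝ} (hη₀ : 0 ≤ η) (hη : η * K ≤ 2) (θ : EuclideanSpace ℝ ι) :
    F (θ - η • A (WithLp.toLp 2 fun j => Γ j * adjoint A (gradient F θ) j)) ≤ F θ :=
  apply_sub_smul_le_of_norm_sq_le_inner_gradient hF hlip hη₀ hη <| le_of_eq <|
    norm_apply_sq_eq_re_inner_of_adjoint_apply_eq <|
      adjoint_apply_scaled_adjoint_eq_adjoint hA hΓ (gradient F θ)

end WeightedPullback

/-- Stability of RPS with gradient scaling: with `F : ℝⁿ → ℝ` differentiable with
`L`-Lipschitz gradient, `h : {1,…,n} → {1,…,m}` surjective, signs `g(i) ∈ {−1,+1}`,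
scales `λ_i > 0`, `A : ℝᵐ → ℝⁿ` the linear map `(Aψ)_i = g(i)·λ_i·ψ_{h(i)}`, and the
gradient scaler `Γ(j) = 1/∑_{i : h(i)=j} λ_i²`, for any `0 < η ≤ 2/L` the scaled
gradient-descent step `θ' = θ − η·A(Γ ⊙ Aᵀ∇F(θ))` with `θ = Aψ` satisfies
`F(θ') ≤ F(θ)`: the stability range `(0, 2/L)` of the learning rate is maintained. -/
theorem rps_gradient_scaling_stable (n m : ℕ)
    (F : EuclideanSpace ℝ (Fin n) → ℝ) (L : ℝ) (hL : 0 < L)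
    (hdiff : Differentiable ℝ F) (hlip : LipschitzWith (Real.toNNReal L) (gradient F))
    (h : Fin n → Fin m) (hsurj : Function.Surjective h)
    (g : Fin n → ℝ) (hg : ∀ i, g i = 1 ∨ g i = -1)
    (lam : Fin n → ℝ) (hlam : ∀ i, 0 < lam i)
    (A : EuclideanSpace ℝ (Fin m) →L[ℝ] EuclideanSpace ℝ (Fin n))
    (hA : ∀ ψ i, A ψ i = g i * lam i * ψ (h i))
    (Γ : Fin m → ℝ)
    (hΓ : ∀ j, Γ j = 1 / ∑ i ∈ Finset.univ.filter (fun i => h i = j), (lam i) ^ 2)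
    (η : ℝ) (hη0 : 0 < η) (hη : η ≤ 2 / L)
    (ψ : EuclideanSpace ℝ (Fin m)) (θ : EuclideanSpace ℝ (Fin n)) (hθ : θ = A ψ) :
    F (θ - η • A ((WithLp.toLp 2 fun j => Γ j * (ContinuousLinearMap.adjoint A) (gradient F θ) j :
        EuclideanSpace ℝ (Fin m)))) ≤ F θ := by
  have hsq (i : Fin n) : (g i * lam i) ^ 2 = lam i ^ 2 := by
    rw [mul_pow, sq_eq_one_iff.2 (hg i), one_mul]
  exact rps_gradient_scaling_stable_general hdiff hlip hA (by simp [hsq, hΓ]) hη0.le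
    (by rwa [Real.coe_toNNReal L hL.le, ← le_div_iff₀ hL]) θ
end

section
/- Optimal load of RANDOMFOLD: for any n, m ≥ 1 and any function u : ℕ → ℕ, the map h_u : {0,…,n−1} → {0,…,m−1} defined by h_u(x) = (u(⌊x/m⌋) + (x mod m)) mod m satisfies, for every bucket j ∈ {0,…,m−1}, |{x ∈ {0,…,n−1} : h_u(x) = j}| ≤ ⌈n/m⌉. -/
open Finset

/-- The RANDOMFOLD map `h_u` with `m` buckets, extended from `{0,…,n−1}` to all of `ℕ`: the block
`⌊x/m⌋` of `x` is rotated by `u ⌊x/m⌋`. -/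
def randomFold (m : ℕ) (u : ℕ → ℕ) (x : ℕ) : ℕ :=
  (u (x / m) + x % m) % m

theorem randomFold_injOn_block (m : ℕ) (u : ℕ → ℕ) (k : ℕ) :
    Set.InjOn (randomFold m u) {x | x / m = k} := by
  rintro x rfl y (hdiv : y / m = x / m) hxy
  have hshift : u (x / m) + x % m ≡ u (x / m) + y % m [MOD m] := by
    simpa only [randomFold, Nat.ModEq, hdiv] using hxy
  have hmod : x ≡ y [MOD m] :=
    (Nat.mod_modEq x m).symm.trans ((hshift.add_left_cancel' _).trans (Nat.mod_modEq y m))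
  exact Nat.ext_div_mod hdiv.symm hmod

theorem card_le_ceilDiv_of_injOn_div {n m : ℕ} (hm : 0 < m) {s : Finset ℕ} (hs : s ⊆ range n)
    (hinj : Set.InjOn (· / m) (s : Set ℕ)) : #s ≤ n ⌈/⌉ m := by
  have hmaps : Set.MapsTo (· / m) (s : Set ℕ) (range (n ⌈/⌉ m) : Set ℕ) := fun x hx =>
    mem_coe.2 <| mem_range.2 <|
      Nat.div_lt_of_lt_mul ((mem_range.1 (hs hx)).trans_le (le_smul_ceilDiv hm))
  simpa only [card_range] using card_le_card_of_injOn _ hmaps hinj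

theorem card_filter_eq_le_ceilDiv_of_injOn_block {α : Type*} [DecidableEq α] {m : ℕ} (hm : 0 < m)
    {f : ℕ → α} (hf : ∀ k, Set.InjOn f {x | x / m = k}) (n : ℕ) (a : α) :
    #{x ∈ range n | f x = a} ≤ n ⌈/⌉ m := by
  refine card_le_ceilDiv_of_injOn_div hm (filter_subset _ _) fun x hx y hy hdiv => ?_
  have hfiber : f x = f y := (mem_filter.1 hx).2.trans (mem_filter.1 hy).2.symm
  exact hf (y / m) hdiv rfl hfiber

/-- Optimal load of RANDOMFOLD: for `n, m ≥ 1` and any `u : ℕ → ℕ`, the map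
`h_u(x) = (u(⌊x/m⌋) + (x mod m)) mod m` on `{0,…,n−1}` sends at most `⌈n/m⌉` elements
to each bucket `j ∈ {0,…,m−1}`. -/
theorem randomfold_optimal_load (n m : ℕ) (hn : 1 ≤ n) (hm : 1 ≤ m) (u : ℕ → ℕ)
    (j : ℕ) (hj : j < m) :
    ((Finset.range n).filter (fun x => (u (x / m) + x % m) % m = j)).card ≤ n ⌈/⌉ m :=
  card_filter_eq_le_ceilDiv_of_injOn_block hm (randomFold_injOn_block m u) n j
end

section
/- Optimal residual of an RPS-compressed linear model: in a real inner product space, let y satisfy ‖y‖ = σ_y > 0, let x_1,…,x_n be pairwise orthogonal with ‖x_i‖ = σ_x > 0, set ρ_i = ⟨y, x_i⟩/(σ_x σ_y), let n = k·m, let h : {1,…,n} → {1,…,m} be a hash with exactly k indices in every bucket, and let g : {1,…,n} → {−1,+1}. Then the infimum over β ∈ ℝ^m of ‖y − ∑_{j=1}^m β_j (∑_{i : h(i)=j} g(i) x_i)‖² equals σ_y²·(1 − (1/k)·∑_{j=1}^m (∑_{i : h(i)=j} g(i) ρ_i)²). -/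
open Finset
open scoped RealInnerProductSpace

/-!
Vectors supported on disjoint sets of an orthogonal family are orthogonal, so the compressed
features `z_j` are themselves pairwise orthogonal, and `‖z_j‖² = σ_x² ∑_{h i = j} |g i|²`.
Least squares against an orthogonal family decouples: by Pythagoras the squared residual at `β` is
`‖y‖² - ∑_j |⟪y, z_j⟫|² / ‖z_j‖²` plus a nonnegative term that vanishes when every `β_j` is the
coefficient of the projection of `y` onto the line through `z_j`.
-/

section RPSCompression

open scoped InnerProductSpace ComplexConjugate

variable {𝕜 E ι κ : Type*} [RCLike 𝕜] [NormedAddCommGroup E] [InnerProductSpace 𝕜 E]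

section OrthogonalFamily

theorem inner_sum_smul_right_of_pairwise [DecidableEq ι] {x : ι → E}
    (hx : Pairwise fun i j => ⟪x i, x j⟫_𝕜 = 0) (b : ι → 𝕜) (t : Finset ι) (i : ι) :
    ⟪x i, ∑ j ∈ t, b j • x j⟫_𝕜 = if i ∈ t then b i * (‖x i‖ : 𝕜) ^ 2 else 0 := by
  have hinner (j : ι) : ⟪x i, x j⟫_𝕜 = if i = j then (‖x i‖ : 𝕜) ^ 2 else 0 := by
    split_ifs with hij
    · rw [← hij, inner_self_eq_norm_sq_to_K]
    · exact hx hij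
  simp only [inner_sum, inner_smul_right, hinner, mul_ite, mul_zero, sum_ite_eq]

theorem inner_sum_smul_sum_smul_of_pairwise [DecidableEq ι] {x : ι → E}
    (hx : Pairwise fun i j => ⟪x i, x j⟫_𝕜 = 0) (a b : ι → 𝕜) (s t : Finset ι) :
    ⟪∑ i ∈ s, a i • x i, ∑ i ∈ t, b i • x i⟫_𝕜 =
      ∑ i ∈ s ∩ t, conj (a i) * b i * (‖x i‖ : 𝕜) ^ 2 := by
  simp only [sum_inner, inner_smul_left, inner_sum_smul_right_of_pairwise hx, mul_ite, mul_zero,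
    sum_ite_mem, mul_assoc]

theorem norm_sum_smul_sq_of_pairwise {x : ι → E}
    (hx : Pairwise fun i j => ⟪x i, x j⟫_𝕜 = 0) (a : ι → 𝕜) (s : Finset ι) :
    ‖∑ i ∈ s, a i • x i‖ ^ 2 = ∑ i ∈ s, ‖a i‖ ^ 2 * ‖x i‖ ^ 2 := by
  classical
  apply RCLike.ofReal_injective (K := 𝕜)
  push_cast
  rw [← inner_self_eq_norm_sq_to_K, inner_sum_smul_sum_smul_of_pairwise hx, inter_self]
  simp only [RCLike.conj_mul]

end OrthogonalFamily

section LeastSquares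

variable (𝕜) in
/-- The coefficient of `v` in the orthogonal projection of `y` onto the line spanned by `v`,
hence the optimal weight of `v` when `y` is fitted by an orthogonal family. Here `v` is the
first argument of the inner product to make the coefficient linear in `y`. -/
noncomputable def projCoeff (v y : E) : 𝕜 :=
  ⟪v, y⟫_𝕜 / (‖v‖ : 𝕜) ^ 2

theorem norm_projCoeff_sq_mul_norm_sq {v : E} (hv : v ≠ 0) (y : E) :
    ‖projCoeff 𝕜 v y‖ ^ 2 * ‖v‖ ^ 2 = ‖⟪y, v⟫_𝕜‖ ^ 2 / ‖v‖ ^ 2 := by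
  have hv' : ‖v‖ ≠ 0 := norm_ne_zero_iff.mpr hv
  rw [projCoeff, norm_div, norm_pow, RCLike.norm_ofReal, abs_norm, norm_inner_symm]
  field_simp

variable [Fintype κ] {v : κ → E}

theorem inner_sub_sum_projCoeff_smul (hv : Pairwise fun i j => ⟪v i, v j⟫_𝕜 = 0)
    (hv₀ : ∀ j, v j ≠ 0) (y : E) (l : κ) :
    ⟪v l, y - ∑ j, projCoeff 𝕜 (v j) y • v j⟫_𝕜 = 0 := by
  classical
  have hl : (‖v l‖ : 𝕜) ^ 2 ≠ 0 := by simpa using hv₀ l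
  rw [inner_sub_right, inner_sum_smul_right_of_pairwise hv, if_pos (mem_univ l), projCoeff,
    div_mul_cancel₀ _ hl, sub_self]

theorem norm_sub_sum_smul_sq_eq_add (hv : Pairwise fun i j => ⟪v i, v j⟫_𝕜 = 0)
    (hv₀ : ∀ j, v j ≠ 0) (y : E) (β : κ → 𝕜) :
    ‖y - ∑ j, β j • v j‖ ^ 2 = ‖y - ∑ j, projCoeff 𝕜 (v j) y • v j‖ ^ 2 +
      ∑ j, ‖projCoeff 𝕜 (v j) y - β j‖ ^ 2 * ‖v j‖ ^ 2 := by
  set r := y - ∑ j, projCoeff 𝕜 (v j) y • v j with hr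
  have hsplit : y - ∑ j, β j • v j = ∑ j, (projCoeff 𝕜 (v j) y - β j) • v j + r := by
    simp only [hr, sub_smul, sum_sub_distrib]
    abel
  have horth : ⟪∑ j, (projCoeff 𝕜 (v j) y - β j) • v j, r⟫_𝕜 = 0 := by
    simp only [sum_inner, inner_smul_left, hr, inner_sub_sum_projCoeff_smul hv hv₀, mul_zero,
      sum_const_zero]
  have hpyth := norm_add_sq_eq_norm_sq_add_norm_sq_of_inner_eq_zero _ _ horth
  rw [hsplit, sq, hpyth, ← sq, ← sq, norm_sum_smul_sq_of_pairwise hv, add_comm]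

theorem norm_sub_sum_projCoeff_smul_sq (hv : Pairwise fun i j => ⟪v i, v j⟫_𝕜 = 0)
    (hv₀ : ∀ j, v j ≠ 0) (y : E) :
    ‖y - ∑ j, projCoeff 𝕜 (v j) y • v j‖ ^ 2 =
      ‖y‖ ^ 2 - ∑ j, ‖⟪y, v j⟫_𝕜‖ ^ 2 / ‖v j‖ ^ 2 := by
  have hzero := norm_sub_sum_smul_sq_eq_add hv hv₀ y 0
  simp only [Pi.zero_apply, zero_smul, sum_const_zero, sub_zero,
    norm_projCoeff_sq_mul_norm_sq (hv₀ _)] at hzero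
  exact eq_sub_of_add_eq hzero.symm

theorem isLeast_norm_sub_sum_smul_sq (hv : Pairwise fun i j => ⟪v i, v j⟫_𝕜 = 0)
    (hv₀ : ∀ j, v j ≠ 0) (y : E) :
    IsLeast {r : ℝ | ∃ β : κ → 𝕜, r = ‖y - ∑ j, β j • v j‖ ^ 2}
      (‖y‖ ^ 2 - ∑ j, ‖⟪y, v j⟫_𝕜‖ ^ 2 / ‖v j‖ ^ 2) := by
  rw [← norm_sub_sum_projCoeff_smul_sq hv hv₀]
  refine ⟨⟨fun j => projCoeff 𝕜 (v j) y, rfl⟩, ?_⟩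
  rintro _ ⟨β, rfl⟩
  rw [norm_sub_sum_smul_sq_eq_add hv hv₀ y β]
  exact le_add_of_nonneg_right (by positivity)

end LeastSquares

section Compression

variable [Fintype ι] [DecidableEq κ]

/-- The feature into which RPS compression with hash `h` merges the bucket `j`: the sum of the
features `x i` with `h i = j`, weighted by `g`. The weights of RPS are the signs `±1`. -/
def compressedFeature (x : ι → E) (h : ι → κ) (g : ι → 𝕜) (j : κ) : E :=
  ∑ i with h i = j, g i • x i

theorem inner_compressedFeature_right (x : ι → E) (h : ι → κ) (g : ι → 𝕜) (y : E) (j : κ) :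
    ⟪y, compressedFeature x h g j⟫_𝕜 = ∑ i with h i = j, g i * ⟪y, x i⟫_𝕜 := by
  simp only [compressedFeature, inner_sum, inner_smul_right]

theorem pairwise_inner_compressedFeature {x : ι → E}
    (hx : Pairwise fun i j => ⟪x i, x j⟫_𝕜 = 0) (h : ι → κ) (g : ι → 𝕜) :
    Pairwise fun j l => ⟪compressedFeature x h g j, compressedFeature x h g l⟫_𝕜 = 0 := by
  intro j l hjl
  have hdisj : Disjoint (univ.filter (h · = j)) (univ.filter (h · = l)) :=
    disjoint_filter.mpr fun i _ hj hl => hjl (hj.symm.trans hl)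
  classical
  rw [compressedFeature, compressedFeature, inner_sum_smul_sum_smul_of_pairwise hx,
    disjoint_iff_inter_eq_empty.mp hdisj, sum_empty]

theorem norm_compressedFeature_sq {x : ι → E} (hx : Pairwise fun i j => ⟪x i, x j⟫_𝕜 = 0)
    {σx : ℝ} (hσ : ∀ i, ‖x i‖ = σx) (h : ι → κ) (g : ι → 𝕜) (j : κ) :
    ‖compressedFeature x h g j‖ ^ 2 = σx ^ 2 * ∑ i with h i = j, ‖g i‖ ^ 2 := by
  simp only [compressedFeature, norm_sum_smul_sq_of_pairwise hx, hσ, mul_sum, mul_comm]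

theorem compressedFeature_ne_zero {x : ι → E} (hx : Pairwise fun i j => ⟪x i, x j⟫_𝕜 = 0)
    (hx₀ : ∀ i, x i ≠ 0) {h : ι → κ} {g : ι → 𝕜} {j : κ} (hj : ∃ i, h i = j ∧ g i ≠ 0) :
    compressedFeature x h g j ≠ 0 := by
  obtain ⟨i, hij, hgi⟩ := hj
  have hlin : LinearIndependent 𝕜 x := linearIndependent_of_ne_zero_of_inner_eq_zero hx₀ hx
  intro hzero
  exact hgi (linearIndependent_iff'.mp hlin _ g hzero i (by simp [hij]))

theorem rps_linear_model_residual_general [Fintype κ] {y : E} {x : ι → E} {σx σy : ℝ}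
    (hσx : 0 < σx) (hσy : 0 < σy) (hy : ‖y‖ = σy) (hx : ∀ i, ‖x i‖ = σx)
    (horth : Pairwise fun i j => ⟪x i, x j⟫_𝕜 = 0)
    {ρ : ι → 𝕜} (hρ : ∀ i, ρ i = ⟪y, x i⟫_𝕜 / (σx * σy))
    {h : ι → κ} {g : ι → 𝕜} (hg : ∀ j, ∃ i, h i = j ∧ g i ≠ 0) :
    IsLeast {r : ℝ | ∃ β : κ → 𝕜, r = ‖y - ∑ j, β j • ∑ i with h i = j, g i • x i‖ ^ 2}
      (σy ^ 2 * (1 - ∑ j, ‖∑ i with h i = j, g i * ρ i‖ ^ 2 /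
        ∑ i with h i = j, ‖g i‖ ^ 2)) := by
  have hx₀ (i : ι) : x i ≠ 0 := norm_pos_iff.mp (hx i ▸ hσx)
  have hcoord (i : ι) : ⟪y, x i⟫_𝕜 = (σx * σy : 𝕜) * ρ i := by
    have hσ : (σx * σy : 𝕜) ≠ 0 := by exact_mod_cast (mul_pos hσx hσy).ne'
    rw [hρ, mul_div_cancel₀ _ hσ]
  have hinner (j : κ) : ⟪y, compressedFeature x h g j⟫_𝕜 =
      (σx * σy : 𝕜) * ∑ i with h i = j, g i * ρ i := by
    simp only [inner_compressedFeature_right, hcoord, mul_sum, mul_left_comm]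
  have hgain (j : κ) : ‖⟪y, compressedFeature x h g j⟫_𝕜‖ ^ 2 /
      ‖compressedFeature x h g j‖ ^ 2 =
        σy ^ 2 * (‖∑ i with h i = j, g i * ρ i‖ ^ 2 / ∑ i with h i = j, ‖g i‖ ^ 2) := by
    rw [hinner, norm_compressedFeature_sq horth hx, norm_mul, norm_mul, RCLike.norm_ofReal,
      RCLike.norm_ofReal, mul_pow, mul_pow, sq_abs, sq_abs, mul_assoc,
      mul_div_mul_left _ _ (pow_pos hσx 2).ne', mul_div_assoc]
  have hleast := isLeast_norm_sub_sum_smul_sq (pairwise_inner_compressedFeature horth h g)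
    (fun j => compressedFeature_ne_zero horth hx₀ (hg j)) y
  simp only [hgain, hy, ← mul_sum] at hleast
  rwa [mul_sub, mul_one]

end Compression

end RPSCompression

/-- Optimal residual of an RPS-compressed linear model: in a real inner product space,
with `‖y‖ = σ_y > 0`, pairwise orthogonal `x_1,…,x_n` with `‖x_i‖ = σ_x > 0`,
correlations `ρ_i = ⟪y, x_i⟫/(σ_x σ_y)`, `n = k·m`, a hash `h` with exactly `k`
indices per bucket, and signs `g(i) ∈ {−1,+1}`, the infimum over `β ∈ ℝᵐ` of
`‖y − ∑_j β_j (∑_{i : h(i)=j} g(i) x_i)‖²` equals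
`σ_y²(1 − (1/k)·∑_j (∑_{i : h(i)=j} g(i) ρ_i)²)`. -/
theorem rps_linear_model_residual {E : Type*} [NormedAddCommGroup E]
    [InnerProductSpace ℝ E] (n m k : ℕ) (hk : 0 < k) (hnm : n = k * m)
    (y : E) (x : Fin n → E) (σx σy : ℝ)
    (hσx : 0 < σx) (hσy : 0 < σy) (hy : ‖y‖ = σy) (hx : ∀ i, ‖x i‖ = σx)
    (horth : ∀ i j, i ≠ j → ⟪x i, x j⟫ = 0)
    (ρ : Fin n → ℝ) (hρ : ∀ i, ρ i = ⟪y, x i⟫ / (σx * σy))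
    (h : Fin n → Fin m) (hload : ∀ j, (Finset.univ.filter (fun i => h i = j)).card = k)
    (g : Fin n → ℝ) (hg : ∀ i, g i = 1 ∨ g i = -1) :
    IsGLB
      {r : ℝ | ∃ β : Fin m → ℝ,
        r = ‖y - ∑ j, β j • (∑ i ∈ Finset.univ.filter (fun i => h i = j), g i • x i)‖ ^ 2}
      (σy ^ 2 * (1 - (1 / (k : ℝ)) *
        ∑ j, (∑ i ∈ Finset.univ.filter (fun i => h i = j), g i * ρ i) ^ 2)) := by
  have hg_sq (i : Fin n) : g i ^ 2 = 1 := sq_eq_one_iff.mpr (hg i)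
  have hbucket (j : Fin m) : ∃ i, h i = j ∧ g i ≠ 0 := by
    obtain ⟨i, hi⟩ := card_pos.mp (hload j ▸ hk)
    exact ⟨i, (mem_filter.mp hi).2, fun hi₀ => by simpa [hi₀] using hg_sq i⟩
  simpa only [Real.norm_eq_abs, sq_abs, hg_sq, sum_const, hload, nsmul_eq_mul, mul_one,
    div_eq_inv_mul, mul_sum] using
    (rps_linear_model_residual_general hσx hσy hy hx (fun i j => horth i j) hρ hbucket).isGLB
end
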